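/- arXiv:2109.03168 — 2 statements merged into one kernel-verified Lean document; each statement's English description precedes it below -/
import Mathlib

section
/- Let a, τ, r be integers with 1 < a ≤ τ, 1 ≤ r < τ and τ + 1 < a(r+1), and let q ≥ r + a − 1 be a prime power. Then there exists an (a, τ, r) LRSC over the field F_{q^{2^{a−2}}} with k = τ+1−a and n = τ+1, i.e., of rate (τ+1−a)/(τ+1). Since min{(τ+1−a)/(τ+1), r/(r+1)} = (τ+1−a)/(τ+1) in this parameter range, this LRSC is rate-optimal. -/
/-- A packet-level code with a causal systematic encoder: the parity part of the
coded packet at time `t` is a fixed function of the message packets at times `≤ t`. -/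
structure PacketCode (F : Type) (k n : ℕ) where
  parity : (ℤ → Fin k → F) → ℤ → Fin (n - k) → F
  causal : ∀ (m m' : ℤ → Fin k → F) (t : ℤ),
    (∀ t' ≤ t, m t' = m' t') → parity m t = parity m' t

/-- A valid message stream vanishes at negative times. -/
def IsMsgStream {F : Type} [Zero F] {k : ℕ} (m : ℤ → Fin k → F) : Prop :=
  ∀ t < 0, m t = 0

/-- `(a, τ)` streaming-code property. -/
def IsSC {F : Type} [Zero F] {k n : ℕ} (C : PacketCode F k n) (a τ : ℕ) : Prop :=
  ∀ m m' : ℤ → Fin k → F, IsMsgStream m → IsMsgStream m' →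
    ∀ t : ℤ, 0 ≤ t →
      ∀ E : Finset ℤ, (∀ x ∈ E, t ≤ x ∧ x ≤ t + τ) → t ∈ E → E.card ≤ a →
        (∀ t' < t, m t' = m' t') →
        (∀ t' : ℤ, t ≤ t' → t' ≤ t + τ → t' ∉ E →
          m t' = m' t' ∧ C.parity m t' = C.parity m' t') →
        m t = m' t

/-- `(a, τ, r)` locally recoverable streaming code. -/
def IsLRSC {F : Type} [Zero F] {k n : ℕ} (C : PacketCode F k n) (a τ r : ℕ) : Prop :=
  IsSC C a τ ∧ IsSC C 1 r


lemma tower_aux {L X J : Type} [Field L] [DecidableEq X] [DecidableEq J] (K : Subfield L) (α : L) (hα : α ∉ K)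
    (C : Finset X) (Rw : Finset J) (R : J → X → L) (g h : X → L) (hcard : C.card = Rw.card + 1)
    (hR : ∀ j ∈ Rw, ∀ x ∈ C, R j x ∈ K) (hg : ∀ x ∈ C, g x ∈ K) (hh : ∀ x ∈ C, h x ∈ K)
    (triv : ∀ z : X → L, (∀ j ∈ Rw, ∑ x ∈ C, R j x * z x = 0) → ∑ x ∈ C, g x * z x = 0 →
      ∀ x ∈ C, z x = 0)
    (z : X → L) (hz : ∀ j ∈ Rw, ∑ x ∈ C, R j x * z x = 0)
    (hz' : ∑ x ∈ C, (α * g x + h x) * z x = 0) : ∀ x ∈ C, z x = 0 := by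
  classical
  have ecard : Fintype.card C = Fintype.card (Option Rw) := by simp [hcard]
  let e : C ≃ Option Rw := Fintype.equivOfCardEq ecard
  let mat : (X → L) → Matrix (Option Rw) (Option Rw) L := fun f =>
    Matrix.of fun o c => o.elim (f (e.symm c)) (fun j => R j (e.symm c))
  have hmat : ∀ f, mat f = Matrix.updateRow (mat 0) none (fun c => f (e.symm c)) := by
    intro f
    ext o c
    rcases o with _ | o <;> simp [mat, Matrix.updateRow_apply]
  have hdet : (mat (fun x => α * g x + h x)).det = α * (mat g).det + (mat h).det := by
    rw [hmat (fun x => α * g x + h x), hmat g, hmat h, ← Matrix.det_updateRow_smul,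
      ← Matrix.det_updateRow_add]
    rfl
  have hmem : ∀ f : X → L, (∀ x ∈ C, f x ∈ K) → (mat f).det ∈ K := by
    intro f hf
    rw [Matrix.det_apply]
    refine K.sum_mem fun σ _ => ?_
    have : ∏ i, mat f (σ i) i ∈ K := by
      refine K.prod_mem fun i _ => ?_
      show (σ i).elim _ _ ∈ K
      rcases σ i with _ | o
      · exact hf _ (e.symm i).2
      · exact hR _ o.2 _ (e.symm i).2
    rcases Int.units_eq_one_or (Equiv.Perm.sign σ) with h1 | h1 <;> rw [h1]
    · simpa using this
    · simpa using this
  have hsum : ∀ (f : X → L) (z : X → L), ∑ c : Option Rw, f (e.symm c) * z (e.symm c) =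
      ∑ x ∈ C, f x * z x := by
    intro f z
    rw [← Finset.sum_coe_sort C (fun x => f x * z x)]
    exact Equiv.sum_comp e.symm (fun x : C => f x * z x)
  have hgdet : (mat g).det ≠ 0 := by
    intro h0
    obtain ⟨v, hv, hv0⟩ := Matrix.exists_mulVec_eq_zero_iff.2 h0
    apply hv
    let z : X → L := fun x => if hx : x ∈ C then v (e ⟨x, hx⟩) else 0
    have hzv : ∀ c, z (e.symm c) = v c := by intro c; simp [z]
    have := triv z ?_ ?_
    · ext c
      rw [← hzv]; exact this _ (e.symm c).2
    · intro j hj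
      have := congrFun hv0 (some ⟨j, hj⟩)
      rw [← hsum]
      simp only [hzv]
      exact this
    · have := congrFun hv0 none
      rw [← hsum]
      simp only [hzv]
      exact this
  have hne : (mat (fun x => α * g x + h x)).det ≠ 0 := by
    rw [hdet]
    intro h0
    apply hα
    have : α = - (mat h).det / (mat g).det := by
      field_simp
      linear_combination h0
    rw [this]
    exact K.div_mem (K.neg_mem (hmem h hh)) (hmem g hg)
  by_contra hcon
  push Not at hcon
  obtain ⟨x, hx, hx0⟩ := hcon
  apply hne
  refine Matrix.exists_mulVec_eq_zero_iff.1 ⟨fun c => z (e.symm c), ?_, ?_⟩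
  · intro h0
    have := congrFun h0 (e ⟨x, hx⟩)
    simp at this
    exact hx0 this
  · ext o
    rcases o with _ | o
    · have := hsum (fun x => α * g x + h x) z
      rw [hz'] at this
      exact this
    · have := hsum (R o) z
      rw [hz _ o.2] at this
      exact this

/-- local coefficients -/
def Mc {L : Type} [Field L] (g : ℕ → L) (r d e : ℕ) : L :=
  if d = 0 then 1 else if e = 0 then 0 else (g e - g (r + d))⁻¹

open Polynomial in
lemma cauchy_left {L : Type} [Field L] (g : ℕ → L) (r a : ℕ) (ha : 1 ≤ a)
    (hg : ∀ i j, 1 ≤ i → i ≤ r + a - 1 → 1 ≤ j → j ≤ r + a - 1 → g i = g j → i = j)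
    (D : Finset ℕ) (B : Finset ℕ) (hB : ∀ b ∈ B, 1 ≤ b ∧ b < a) (hD : ∀ e ∈ D, e ≤ r)
    (hc : D.card = B.card + 1) (c0 : L) (c : ℕ → L)
    (h : ∀ e ∈ D, c0 + ∑ b ∈ B, c b * Mc g r b e = 0) : c0 = 0 ∧ ∀ b ∈ B, c b = 0 := by
  classical
  let Q : L[X] := Polynomial.C c0 * ∏ b ∈ B, (X - Polynomial.C (g (r + b))) +
    ∑ b ∈ B, Polynomial.C (c b) * ∏ b' ∈ B.erase b, (X - Polynomial.C (g (r + b')))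
  have hCm : ∀ (c : L) (p : L[X]), (Polynomial.C c * p).degree ≤ p.degree := by
    intro c p
    rw [← Polynomial.smul_eq_C_mul]
    exact Polynomial.degree_smul_le c p
  have hdeg2 : (∑ b ∈ B, Polynomial.C (c b) * ∏ b' ∈ B.erase b, (X - Polynomial.C (g (r + b')))).degree
      < (B.card : WithBot ℕ) := by
    refine lt_of_le_of_lt (Polynomial.degree_sum_le _ _) ?_
    rw [Finset.sup_lt_iff (by exact WithBot.bot_lt_coe _)]
    intro b hb
    refine lt_of_le_of_lt (hCm _ _) ?_
    rw [Polynomial.degree_prod]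
    simp only [Polynomial.degree_X_sub_C, Finset.sum_const, nsmul_eq_mul, mul_one]
    rw [Finset.card_erase_of_mem hb]
    have : 0 < B.card := Finset.card_pos.2 ⟨b, hb⟩
    exact_mod_cast Nat.sub_lt this one_pos
  have hdeg1 : (Polynomial.C c0 * ∏ b ∈ B, (X - Polynomial.C (g (r + b)))).degree ≤ (B.card : WithBot ℕ) := by
    refine le_trans (hCm _ _) ?_
    rw [Polynomial.degree_prod]
    simp
  have hroot : ∀ e ∈ D, e ≠ 0 → Q.eval (g e) = 0 := by
    intro e he he0
    have hne : ∀ b ∈ B, g e - g (r + b) ≠ 0 := by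
      intro b hb h0
      have := hg e (r + b) (by omega) (by have := hD e he; have := hB b hb; omega) (by have := hB b hb; omega)
        (by have := hB b hb; omega) (sub_eq_zero.1 h0)
      have := hD e he; have := hB b hb
      omega
    have h1 := h e he
    have : Q.eval (g e) = (∏ b ∈ B, (g e - g (r + b))) * (c0 + ∑ b ∈ B, c b * Mc g r b e) := by
      simp only [Q, eval_add, eval_mul, eval_C, eval_prod, eval_sub, eval_X, eval_finsetSum]
      rw [mul_add, Finset.mul_sum]
      congr 1
      · ring
      · refine Finset.sum_congr rfl fun b hb => ?_
        rw [← Finset.mul_prod_erase B _ hb]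
        have hb1 := (hB b hb).1
        simp only [Mc, he0, show b ≠ 0 by omega, if_false]
        have := hne b hb
        field_simp
    rw [this, h1, mul_zero]
  have hginj : Set.InjOn g ↑(D.erase 0) := by
    intro i hi j hj hij
    simp only [Finset.coe_erase, Set.mem_sdiff, Finset.mem_coe, Set.mem_singleton_iff] at hi hj
    have := hD i hi.1; have := hD j hj.1; have := hi.2; have := hj.2
    exact hg i j (by omega) (by omega) (by omega) (by omega) hij
  have hQ : Q = 0 := by
    by_cases h0 : (0 : ℕ) ∈ D
    · have hc0 : c0 = 0 := by
        have := h 0 h0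
        rw [Finset.sum_eq_zero, add_zero] at this
        · exact this
        · intro b hb
          have hb1 := (hB b hb).1
          simp [Mc, show b ≠ 0 by omega]
      refine Polynomial.eq_zero_of_degree_lt_of_eval_finset_eq_zero ((D.erase 0).image g) ?_ ?_
      · rw [Finset.card_image_of_injOn hginj, Finset.card_erase_of_mem h0, hc]
        simp only [Q, hc0, map_zero, zero_mul, zero_add]
        exact hdeg2
      · intro y hy
        simp only [Finset.mem_image, Finset.mem_erase] at hy
        obtain ⟨e, ⟨he0, he⟩, rfl⟩ := hy
        exact hroot e he he0
    · refine Polynomial.eq_zero_of_degree_lt_of_eval_finset_eq_zero ((D.erase 0).image g) ?_ ?_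
      · rw [Finset.card_image_of_injOn hginj, Finset.erase_eq_of_notMem h0, hc]
        refine lt_of_le_of_lt (Polynomial.degree_add_le _ _) ?_
        refine lt_of_le_of_lt (max_le hdeg1 hdeg2.le) ?_
        exact_mod_cast Nat.lt_succ_self _
      · intro y hy
        simp only [Finset.mem_image, Finset.mem_erase] at hy
        obtain ⟨e, ⟨he0, he⟩, rfl⟩ := hy
        exact hroot e he he0
  have hcb : ∀ b ∈ B, c b = 0 := by
    intro b hb
    have h1 : Q.eval (g (r + b)) = 0 := by rw [hQ]; simp
    simp only [Q, eval_add, eval_mul, eval_C, eval_prod, eval_sub, eval_X, eval_finsetSum] at h1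
    rw [Finset.prod_eq_zero hb (by simp), mul_zero, zero_add, Finset.sum_eq_single_of_mem b hb] at h1
    · rcases mul_eq_zero.1 h1 with h2 | h2
      · exact h2
      · exfalso
        rw [Finset.prod_eq_zero_iff] at h2
        obtain ⟨b', hb', h3⟩ := h2
        rw [Finset.mem_erase] at hb'
        have i1 := hB b hb
        have i2 := hB b' hb'.2
        have := hg _ _ (by omega) (by omega) (by omega) (by omega) (sub_eq_zero.1 h3)
        omega
    · intro b' hb' hne
      rw [Finset.prod_eq_zero (i := b), mul_zero]
      · simp [hb, hne.symm]
      · simp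
  refine ⟨?_, hcb⟩
  obtain ⟨e, he⟩ : D.Nonempty := Finset.card_pos.1 (by omega)
  have := h e he
  rwa [Finset.sum_eq_zero, add_zero] at this
  intro b hb
  rw [hcb b hb, zero_mul]

lemma cauchy_right {L X : Type} [Field L] [DecidableEq X] (g : ℕ → L) (r a : ℕ) (ha : 1 ≤ a)
    (hg : ∀ i j, 1 ≤ i → i ≤ r + a - 1 → 1 ≤ j → j ≤ r + a - 1 → g i = g j → i = j)
    (C : Finset X) (e : X → ℕ) (B : Finset ℕ) (hB : ∀ b ∈ B, 1 ≤ b ∧ b < a) (hC : ∀ x ∈ C, e x ≤ r)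
    (he : ∀ x ∈ C, ∀ y ∈ C, e x = e y → x = y)
    (hc : C.card = B.card + 1) (z : X → L) (h0 : ∑ x ∈ C, z x = 0)
    (h : ∀ b ∈ B, ∑ x ∈ C, Mc g r b (e x) * z x = 0) : ∀ x ∈ C, z x = 0 := by
  classical
  have ecard : Fintype.card C = Fintype.card (Option B) := by simp [hc]
  let E : C ≃ Option B := Fintype.equivOfCardEq ecard
  let mat : Matrix (Option B) (Option B) L := 
    Matrix.of fun o c => o.elim 1 (fun j => Mc g r j (e (E.symm c)))
  have hne : mat.det ≠ 0 := by
    intro hd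
    obtain ⟨v, hv, hv0⟩ := Matrix.exists_vecMul_eq_zero_iff.2 hd
    apply hv
    have := cauchy_left g r a ha hg (C.image e) B hB (by simpa using hC)
      (by rw [Finset.card_image_of_injOn he, hc]) (v none)
      (fun b => if hb : b ∈ B then v (some ⟨b, hb⟩) else 0) ?_
    · ext o
      rcases o with _ | o
      · exact this.1
      · simpa using this.2 o o.2
    · intro y hy
      obtain ⟨x, hx, rfl⟩ := Finset.mem_image.1 hy
      have h1 := congrFun hv0 (E ⟨x, hx⟩)
      simp only [Matrix.vecMul, dotProduct, Fintype.sum_option, mat, Matrix.of_apply, Option.elim,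
        Equiv.symm_apply_apply, Pi.zero_apply, mul_one] at h1
      rw [← h1, ← Finset.sum_coe_sort B]
      simp
  by_contra hcon
  push Not at hcon
  obtain ⟨x, hx, hx0⟩ := hcon
  apply hne
  have hsum : ∀ (f : X → L), ∑ c : Option B, f (E.symm c)  = ∑ x ∈ C, f x := by
    intro f 
    rw [← Finset.sum_coe_sort C f]
    exact Equiv.sum_comp E.symm (fun x : C => f x)
  refine Matrix.exists_mulVec_eq_zero_iff.1 ⟨fun c => z (E.symm c), ?_, ?_⟩
  · intro h0
    have := congrFun h0 (E ⟨x, hx⟩)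
    simp at this
    exact hx0 this
  · ext o
    rcases o with _ | o
    · have := hsum z
      rw [h0] at this
      simpa [mat, Matrix.mulVec, dotProduct] using this
    · have := hsum (fun x => Mc g r o (e x) * z x)
      rw [h _ o.2] at this
      exact this

/-- parity-check entries -/
def Hc {L : Type} [Field L] (w g : ℕ → L) (r : ℕ) (σ : ℤ → ℤ) (e : ℤ → ℕ) (v x : ℤ) : L :=
  if σ x ≤ v then w (v - σ x).toNat * Mc g r (v - σ x).toNat (e x) else 0

lemma core {L : Type} [Field L] (w g : ℕ → L) (r a : ℕ) (ha : 1 ≤ a)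
    (hg : ∀ i j, 1 ≤ i → i ≤ r + a - 1 → 1 ≤ j → j ≤ r + a - 1 → g i = g j → i = j)
    (S : ℕ → Subfield L) (hS : Monotone S) (hgS : ∀ i, g i ∈ S 0) (w0 : w 0 = 1) (w1 : w 1 = 1)
    (hw : ∀ d, 2 ≤ d → d < a → w d ∈ S (d - 1) ∧ w d ∉ S (d - 2))
    (σ : ℤ → ℤ) (e : ℤ → ℕ) (her : ∀ x, e x ≤ r) (hinj : ∀ x y, σ x = σ y → e x = e y → x = y) :
    ∀ i : ℕ, 1 ≤ i → i ≤ a → ∀ (u : ℤ) (B : Finset ℕ) (C : Finset ℤ),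
      (∀ b ∈ B, i ≤ b ∧ b < a) → C.card = i + B.card → (∀ x ∈ C, u ≤ σ x) →
      (∀ j : ℕ, 1 ≤ j → j ≤ i → j + B.card ≤ (C.filter (fun x => σ x < u + j)).card) →
      ∀ z : ℤ → L, (∀ v : ℕ, v < i → ∑ x ∈ C, Hc w g r σ e (u + v) x * z x = 0) →
        (∀ b ∈ B, ∑ x ∈ C, (if σ x = u then Mc g r b (e x) else 0) * z x = 0) →
        ∀ x ∈ C, z x = 0 := by
  intro i
  have hMS : ∀ d e, Mc g r d e ∈ S 0 := by
    intro d e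
    unfold Mc
    split_ifs
    · exact (S 0).one_mem
    · exact (S 0).zero_mem
    · exact (S 0).inv_mem ((S 0).sub_mem (hgS _) (hgS _))
  have hwS : ∀ d n, d < a → d ≤ n + 1 → w d ∈ S n := by
    intro d n hd hn
    rcases Nat.lt_or_ge d 2 with h | h
    · interval_cases d
      · rw [w0]; exact (S n).one_mem
      · rw [w1]; exact (S n).one_mem
    · exact hS (by omega) (hw d h hd).1
  induction i using Nat.strong_induction_on with
  | _ i ih =>
  intro hi1 hia u B C hB hcard hu hF z hz hzB
  -- all columns have segment below u + i
  have hall : ∀ x ∈ C, σ x < u + i := by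
    have h1 := hF i hi1 le_rfl
    have h2 : C.filter (fun x => σ x < u + i) = C :=
      Finset.eq_of_subset_of_card_le (Finset.filter_subset _ _) (by omega)
    intro x hx
    rw [← h2] at hx
    exact (Finset.mem_filter.1 hx).2
  by_cases hblock : ∃ t : ℕ, 1 ≤ t ∧ t < i ∧ (C.filter (fun x => σ x < u + t)).card = t + B.card
  · obtain ⟨t, ht1, hti, ht⟩ := hblock
    have hz1 : ∀ x ∈ C.filter (fun x => σ x < u + t), z x = 0 := by
      apply ih t hti ht1 (by omega) u B _ (fun b hb => ⟨by have := hB b hb; omega, (hB b hb).2⟩) ht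
        (fun x hx => hu x (Finset.mem_filter.1 hx).1)
      · intro j hj1 hjt
        rw [Finset.filter_filter]
        refine le_trans (hF j hj1 (by omega)) (Finset.card_le_card ?_)
        intro x hx
        rw [Finset.mem_filter] at hx ⊢
        refine ⟨hx.1, ?_, hx.2⟩
        omega
      · intro v hv
        rw [← hz v (by omega)]
        apply Finset.sum_subset (Finset.filter_subset _ _)
        intro x hx hx'
        have : ¬ σ x < u + t := fun h => hx' (Finset.mem_filter.2 ⟨hx, h⟩)
        rw [Hc, if_neg (by omega), zero_mul]
      · intro b hb
        refine Eq.trans ?_ (hzB b hb)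
        apply Finset.sum_subset (Finset.filter_subset _ _)
        intro x hx hx'
        have : ¬ σ x < u + t := fun h => hx' (Finset.mem_filter.2 ⟨hx, h⟩)
        rw [if_neg (by omega), zero_mul]
    have hsplit := Finset.card_filter_add_card_filter_not (s := C) (fun x => σ x < u + t)
    have hz2 : ∀ x ∈ C.filter (fun x => ¬ σ x < u + t), z x = 0 := by
      apply ih (i - t) (by omega) (by omega) (by omega) (u + t) ∅ _ (by simp) (by rw [Finset.card_empty]; omega)
      · intro x hx
        have := (Finset.mem_filter.1 hx).2
        omega
      · intro j hj1 hjt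
        have h1 := hF (t + j) (by omega) (by omega)
        have h2 : C.filter (fun x => σ x < u + (t + j : ℕ)) ⊆
          C.filter (fun x => σ x < u + t) ∪
            (C.filter (fun x => ¬ σ x < u + t)).filter (fun x => σ x < u + t + j) := by
          intro x hx
          simp only [Finset.mem_filter, Finset.mem_union] at hx ⊢
          have := hx.1
          by_cases h : σ x < u + t
          · left; exact ⟨this, h⟩
          · right; refine ⟨⟨this, h⟩, ?_⟩
            have := hx.2
            push_cast at this
            omega
        have h3 := (Finset.card_le_card h2).trans (Finset.card_union_le _ _)
        simp only [Finset.card_empty]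
        omega
      · intro v hv
        have := hz (t + v) (by omega)
        rw [← this]
        have e1 : u + t + v = u + ((t + v : ℕ) : ℤ) := by push_cast; ring
        rw [e1]
        apply Finset.sum_subset (Finset.filter_subset _ _)
        intro x hx hx'
        have : σ x < u + t := by
          by_contra h
          exact hx' (Finset.mem_filter.2 ⟨hx, h⟩)
        rw [hz1 x (Finset.mem_filter.2 ⟨hx, this⟩), mul_zero]
      · simp
    intro x hx
    by_cases h : σ x < u + t
    · exact hz1 x (Finset.mem_filter.2 ⟨hx, h⟩)
    · exact hz2 x (Finset.mem_filter.2 ⟨hx, h⟩)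
  push Not at hblock
  have hF' : ∀ t : ℕ, 1 ≤ t → t < i → t + B.card + 1 ≤ (C.filter (fun x => σ x < u + t)).card := by
    intro t ht hti
    have := hF t ht hti.le
    have := hblock t ht hti
    omega
  rcases Nat.lt_or_ge i 2 with hi2 | hi2
  · -- i = 1
    have hi : i = 1 := by omega
    subst hi
    have hσ : ∀ x ∈ C, σ x = u := by
      intro x hx
      have := hall x hx; have := hu x hx
      push_cast at *
      omega
    apply cauchy_right g r a ha hg C e B hB (fun x _ => her x) 
      (fun x hx y hy h => hinj x y (by rw [hσ x hx, hσ y hy]) h) (by omega)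
    · rw [← hz 0 (by omega)]
      refine Finset.sum_congr rfl fun x hx => ?_
      simp [Hc, hσ x hx, w0, Mc]
    · intro b hb
      rw [← hzB b hb]
      refine Finset.sum_congr rfl fun x hx => ?_
      rw [if_pos (hσ x hx)]
  -- reduction step
  have hnot : i - 1 ∉ B := fun h => by have := hB _ h; omega
  have hcB : (insert (i - 1) B).card = B.card + 1 := Finset.card_insert_of_notMem hnot
  have red : ∀ z : ℤ → L, (∀ v : ℕ, v < i - 1 → ∑ x ∈ C, Hc w g r σ e (u + v) x * z x = 0) →
        (∀ b ∈ B, ∑ x ∈ C, (if σ x = u then Mc g r b (e x) else 0) * z x = 0) →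
        ∑ x ∈ C, (if σ x = u then Mc g r (i - 1) (e x) else 0) * z x = 0 →
        ∀ x ∈ C, z x = 0 := by
    intro z h1 h2 h3
    apply ih (i - 1) (by omega) (by omega) (by omega) u (insert (i - 1) B) C
    · intro b hb
      rcases Finset.mem_insert.1 hb with rfl | hb
      · omega
      · have := hB b hb; omega
    · omega
    · exact hu
    · intro j hj1 hj2
      have := hF' j hj1 (by omega)
      omega
    · exact h1
    · intro b hb
      rcases Finset.mem_insert.1 hb with rfl | hb
      · exact h3
      · exact h2 b hb
  rcases Nat.lt_or_ge i 3 with hi3 | hi3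
  · have hi : i = 2 := by omega
    subst hi
    have hσ : ∀ x ∈ C, σ x = u := by
      have h1 := hF' 1 le_rfl (by omega)
      have h2 : C.filter (fun x => σ x < u + (1 : ℕ)) = C :=
        Finset.eq_of_subset_of_card_le (Finset.filter_subset _ _) (by omega)
      intro x hx
      have h3 := hu x hx
      rw [← h2] at hx
      have := (Finset.mem_filter.1 hx).2
      push_cast at this
      omega
    apply red z (fun v hv => hz v (by omega)) hzB
    rw [← hz 1 (by omega)]
    refine Finset.sum_congr rfl fun x hx => ?_
    simp [Hc, hσ x hx, w1]
  · let R : ℕ ⊕ ℕ → ℤ → L := Sum.elim (fun v x => Hc w g r σ e (u + v) x)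
      (fun b x => if σ x = u then Mc g r b (e x) else 0)
    have hHc : ∀ (v : ℕ) (x : ℤ), x ∈ C → v < i → (v + 1 < i ∨ σ x ≠ u) → Hc w g r σ e (u + v) x ∈ S (i - 3) := by
      intro v x hx hv h
      have := hu x hx
      unfold Hc
      split_ifs with h1
      · refine (S (i - 3)).mul_mem (hwS _ _ (by omega) (by omega)) (hS (Nat.zero_le _) (hMS _ _))
      · exact (S _).zero_mem
    refine tower_aux (S (i - 3)) (w (i - 1)) (by have := (hw (i - 1) (by omega) (by omega)).2; exact this)
      C ((Finset.range (i - 1)).disjSum B) R (fun x => if σ x = u then Mc g r (i - 1) (e x) else 0)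
      (fun x => if σ x = u then 0 else Hc w g r σ e (u + (i - 1 : ℕ)) x) ?_ ?_ ?_ ?_ ?_ z ?_ ?_
    · rw [Finset.card_disjSum, Finset.card_range]; omega
    · intro j hj x hx
      rcases j with v | b
      · have hv : v < i - 1 := by simpa using hj
        exact hHc v x hx (by omega) (by omega)
      · show (if σ x = u then Mc g r b (e x) else 0) ∈ _
        split_ifs
        · exact hS (Nat.zero_le _) (hMS _ _)
        · exact (S _).zero_mem
    · intro x hx
      show (if σ x = u then Mc g r _ (e x) else 0) ∈ _
      split_ifs
      · exact hS (Nat.zero_le _) (hMS _ _)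
      · exact (S _).zero_mem
    · intro x hx
      show (if σ x = u then 0 else Hc w g r σ e (u + (i - 1 : ℕ)) x) ∈ _
      split_ifs with h
      · exact (S _).zero_mem
      · exact hHc _ x hx (by omega) (Or.inr h)
    · intro z h1 h2
      refine red z (fun v hv => h1 (Sum.inl v) (by simpa using hv)) (fun b hb => h1 (Sum.inr b) (by simpa using hb)) h2
    · intro j hj
      rcases j with v | b
      · have hv : v < i - 1 := by simpa using hj
        exact hz v (by omega)
      · exact hzB b (by simpa using hj)
    · refine Eq.trans ?_ (hz (i - 1) (by omega))
      refine Finset.sum_congr rfl fun x hx => ?_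
      by_cases h : σ x = u
      · simp [h, Hc]
      · simp [h]

/-- From an arbitrary erasure pattern. -/
lemma core2 {L : Type} [Field L] (w g : ℕ → L) (r a : ℕ) (ha : 1 ≤ a)
    (hg : ∀ i j, 1 ≤ i → i ≤ r + a - 1 → 1 ≤ j → j ≤ r + a - 1 → g i = g j → i = j)
    (S : ℕ → Subfield L) (hS : Monotone S) (hgS : ∀ i, g i ∈ S 0) (w0 : w 0 = 1) (w1 : w 1 = 1)
    (hw : ∀ d, 2 ≤ d → d < a → w d ∈ S (d - 1) ∧ w d ∉ S (d - 2))
    (σ : ℤ → ℤ) (e : ℤ → ℕ) (her : ∀ x, e x ≤ r) (hinj : ∀ x y, σ x = σ y → e x = e y → x = y)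
    (E : Finset ℤ) (x0 : ℤ) (hx0 : x0 ∈ E) (hE : ∀ x ∈ E, σ x0 ≤ σ x) (hEa : E.card ≤ a)
    (z : ℤ → L) (hz : ∀ v : ℕ, v < a → ∑ x ∈ E, Hc w g r σ e (σ x0 + v) x * z x = 0) :
    z x0 = 0 := by
  classical
  have hex : ∃ i : ℕ, 1 ≤ i ∧ (E.filter (fun x => σ x < σ x0 + i)).card ≤ i :=
    ⟨a, ha, (Finset.card_le_card (Finset.filter_subset _ _)).trans hEa⟩
  let i := Nat.find hex
  obtain ⟨hi1, hi2⟩ : 1 ≤ i ∧ (E.filter (fun x => σ x < σ x0 + i)).card ≤ i := Nat.find_spec hex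
  have hia : i ≤ a := Nat.find_min' hex ⟨ha, (Finset.card_le_card (Finset.filter_subset _ _)).trans hEa⟩
  have hmin : ∀ j : ℕ, 1 ≤ j → j < i → j < (E.filter (fun x => σ x < σ x0 + j)).card := by
    intro j hj hji
    have := Nat.find_min hex hji
    by_contra h
    exact this ⟨hj, by omega⟩
  have hmem : ∀ j : ℕ, 1 ≤ j → x0 ∈ E.filter (fun x => σ x < σ x0 + j) := by
    intro j hj
    rw [Finset.mem_filter]; exact ⟨hx0, by omega⟩
  have hge : i ≤ (E.filter (fun x => σ x < σ x0 + i)).card := by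
    rcases Nat.lt_or_ge i 2 with h | h
    · have := Finset.card_pos.2 ⟨x0, hmem i hi1⟩
      omega
    · have h1 := hmin (i - 1) (by omega) (by omega)
      have : E.filter (fun x => σ x < σ x0 + (i - 1 : ℕ)) ⊆ E.filter (fun x => σ x < σ x0 + i) := by
        intro x hx
        rw [Finset.mem_filter] at hx ⊢
        refine ⟨hx.1, ?_⟩
        have := hx.2
        omega
      have := Finset.card_le_card this
      omega
  refine core w g r a ha hg S hS hgS w0 w1 hw σ e her hinj i hi1 hia (σ x0) ∅
    (E.filter (fun x => σ x < σ x0 + i)) (by simp) (by simp; omega)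
    (fun x hx => hE x (Finset.mem_filter.1 hx).1) ?_ z ?_ (by simp) x0 (hmem i hi1)
  · intro j hj1 hji
    rw [Finset.filter_filter]
    have : E.filter (fun x => σ x < σ x0 + j) ⊆ E.filter (fun x => σ x < σ x0 + i ∧ σ x < σ x0 + j) := by
      intro x hx
      rw [Finset.mem_filter] at hx ⊢
      refine ⟨hx.1, ?_, hx.2⟩
      have := hx.2
      omega
    have h2 := Finset.card_le_card this
    rcases hji.lt_or_eq with h | h
    · have := hmin j hj1 h
      simp; omega
    · subst h
      simp; omega
  · intro v hv
    rw [← hz v (by omega)]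
    apply Finset.sum_subset (Finset.filter_subset _ _)
    intro x hx hx'
    have : ¬ σ x < σ x0 + i := fun h => hx' (Finset.mem_filter.2 ⟨hx, h⟩)
    rw [Hc, if_neg (by omega), zero_mul]

lemma field_tower (q n : ℕ) (hq : IsPrimePow q) :
    ∃ (F : Type) (_ : Field F) (_ : Fintype F), Fintype.card F = q ^ 2 ^ n ∧
      ∃ (S : ℕ → Subfield F) (β g : ℕ → F), Monotone S ∧ (∀ j < n, β j ∈ S (j + 1) ∧ β j ∉ S j) ∧
        (∀ i, g i ∈ S 0) ∧ (∀ i j, 1 ≤ i → i ≤ q → 1 ≤ j → j ≤ q → g i = g j → i = j) := by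
  classical
  obtain ⟨p, m, hp, hm, rfl⟩ := hq
  have hp' : p.Prime := hp.nat_prime
  have : Fact p.Prime := ⟨hp'⟩
  let F := GaloisField p (m * 2 ^ n)
  have hne : m * 2 ^ n ≠ 0 := by positivity
  let _ : Fintype F := Fintype.ofFinite F
  have hcard : Fintype.card F = (p ^ m) ^ 2 ^ n := by
    rw [← Nat.card_eq_fintype_card, GaloisField.card p _ hne, pow_mul]
  refine ⟨F, inferInstance, inferInstance, hcard, ?_⟩
  set q := p ^ m with hqdef
  have hq2 : 2 ≤ q := by
    calc 2 ≤ p := hp'.two_le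
      _ ≤ p ^ m := Nat.le_self_pow (by omega) p
  let S : ℕ → Subfield F := fun j => RingHom.eqLocusField (iterateFrobenius F p (m * 2 ^ j)) (RingHom.id F)
  have hmemS : ∀ j x, x ∈ S j ↔ x ^ (q ^ 2 ^ j) = x := by
    intro j x
    show iterateFrobenius F p (m * 2 ^ j) x = x ↔ _
    rw [iterateFrobenius_def, pow_mul]
  obtain ⟨γ, hγ⟩ := IsCyclic.exists_generator (α := Fˣ)
  have hord : orderOf γ = q ^ 2 ^ n - 1 := by
    rw [orderOf_eq_card_of_forall_mem_zpowers hγ, Nat.card_eq_fintype_card, Fintype.card_units, hcard]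
  -- element of order Q - 1
  have key : ∀ j ≤ n, ∃ x : Fˣ, orderOf x = q ^ 2 ^ j - 1 := by
    intro j hj
    have hdvd : q ^ 2 ^ j - 1 ∣ q ^ 2 ^ n - 1 := by
      obtain ⟨c, rfl⟩ := Nat.exists_eq_add_of_le hj
      rw [pow_add, pow_mul]
      simpa using Nat.sub_dvd_pow_sub_pow (q ^ 2 ^ j) 1 (2 ^ c)
    obtain ⟨c, hc⟩ := hdvd
    have hpos : 0 < q ^ 2 ^ n - 1 := by
      have : 1 < q ^ 2 ^ n := Nat.one_lt_pow (by positivity) (by omega)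
      omega
    refine ⟨γ ^ c, ?_⟩
    have hc0 : c ≠ 0 := by rintro rfl; omega
    rw [orderOf_pow' _ hc0, hord, hc, Nat.gcd_eq_right (Dvd.intro_left _ rfl)]
    exact Nat.mul_div_cancel _ (by omega)
  have hQ : ∀ j, 2 ≤ q ^ 2 ^ j := fun j => by
    calc 2 ≤ q := hq2
      _ ≤ _ := Nat.le_self_pow (by positivity) q
  have keymem : ∀ j (x : Fˣ), ((x : F) ∈ S j ↔ orderOf x ∣ q ^ 2 ^ j - 1) := by
    intro j x
    rw [hmemS, orderOf_dvd_iff_pow_eq_one]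
    have : q ^ 2 ^ j = (q ^ 2 ^ j - 1) + 1 := by have := hQ j; omega
    rw [this, pow_succ]
    simp only [Nat.add_sub_cancel]
    rw [← Units.val_pow_eq_pow_val, ← Units.val_mul, Units.val_inj]
    simp
  have hmono : Monotone S := by
    apply monotone_nat_of_le_succ
    intro j x hx
    rw [hmemS] at hx ⊢
    rw [pow_succ 2 j, pow_mul q, sq, pow_mul, hx, hx]
  choose! x hx using key
  refine ⟨S, fun j => (x (j + 1) : F), fun i => if i ≤ 1 then 0 else (x 0 : F) ^ i, hmono, ?_, ?_, ?_⟩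
  · intro j hj
    rw [keymem, keymem, hx (j + 1) (by omega)]
    refine ⟨dvd_rfl, fun h => ?_⟩
    have h1 := Nat.le_of_dvd (by have := hQ j; omega) h
    have h2 : q ^ 2 ^ j < q ^ 2 ^ (j + 1) := Nat.pow_lt_pow_right (by omega) (Nat.pow_lt_pow_right (by omega) (by omega))
    have := hQ j
    omega
  · intro i
    show (if i ≤ 1 then 0 else (x 0 : F) ^ i) ∈ _
    split_ifs
    · exact (S 0).zero_mem
    · refine (S 0).pow_mem ?_ _
      rw [keymem, hx 0 (by omega)]
  · intro i j hi hiq hj hjq h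
    have hx0 : (x 0 : F) ≠ 0 := (x 0).ne_zero
    dsimp only at h
    split_ifs at h with h1 h2 h2
    · omega
    · exact absurd h.symm (pow_ne_zero _ hx0)
    · exact absurd h (pow_ne_zero _ hx0)
    · rw [← Units.val_pow_eq_pow_val, ← Units.val_pow_eq_pow_val, Units.val_inj, pow_eq_pow_iff_modEq,
        hx 0 (by omega)] at h
      have h' : i - 2 ≡ j - 2 [MOD q - 1] := by
        apply Nat.ModEq.add_right_cancel' 2
        rw [Nat.sub_add_cancel (by omega), Nat.sub_add_cancel (by omega)]
        simpa using h
      have := Nat.ModEq.eq_of_lt_of_lt h' (by omega) (by omega)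
      omega

/-- segment index of a position -/
def seg (a N : ℕ) (x : ℤ) : ℤ := (a : ℤ) * x / N

/-- last (parity) position of a segment -/
def lst (a N : ℕ) (s : ℤ) : ℤ := ((s + 1) * N - 1) / a

/-- distance to the end of the segment -/
def endDist (a N : ℕ) (x : ℤ) : ℕ := (lst a N (seg a N x) - x).toNat

section pos
variable {a N r : ℕ}

lemma lst_le_iff (ha : 1 ≤ a) (s x : ℤ) : x ≤ lst a N s ↔ a * x < (s + 1) * N := by
  unfold lst
  rw [Int.le_ediv_iff_mul_le (by exact_mod_cast ha), mul_comm x]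
  omega

lemma seg_le_iff (hN : 1 ≤ N) (s x : ℤ) : seg a N x ≤ s ↔ a * x < (s + 1) * N := by
  unfold seg
  rw [← Int.lt_add_one_iff, Int.ediv_lt_iff_lt_mul (by exact_mod_cast hN)]

lemma seg_le_iff' (ha : 1 ≤ a) (hN : 1 ≤ N) (s x : ℤ) : seg a N x ≤ s ↔ x ≤ lst a N s := by
  rw [lst_le_iff ha, seg_le_iff hN]

lemma le_lst (ha : 1 ≤ a) (hN : 1 ≤ N) (x : ℤ) : x ≤ lst a N (seg a N x) :=
  (seg_le_iff' ha hN _ _).1 le_rfl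

lemma seg_lst (ha : 1 ≤ a) (haN : a ≤ N) (s : ℤ) : seg a N (lst a N s) = s := by
  have hN : 1 ≤ N := by omega
  apply le_antisymm
  · exact (seg_le_iff' ha hN _ _).2 le_rfl
  · by_contra h
    have h1 : seg a N (lst a N s) ≤ s - 1 := by omega
    rw [seg_le_iff hN] at h1
    have h2 : ¬ (lst a N s + 1 ≤ lst a N s) := by omega
    rw [lst_le_iff ha] at h2
    have : (a : ℤ) ≤ N := by exact_mod_cast haN
    nlinarith

lemma seg_mono (hN : 1 ≤ N) (x y : ℤ) (h : x ≤ y) : seg a N x ≤ seg a N y := by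
  unfold seg
  exact Int.ediv_le_ediv (by exact_mod_cast hN) (mul_le_mul_of_nonneg_left h (by positivity))

lemma seg_add (hN : 1 ≤ N) (x c : ℤ) : seg a N (x + N * c) = seg a N x + a * c := by
  unfold seg
  rw [show (a : ℤ) * (x + N * c) = a * x + (a * c) * N by ring,
    Int.add_mul_ediv_right _ _ (by exact_mod_cast (by omega : N ≠ 0))]

lemma lst_add (ha : 1 ≤ a) (s c : ℤ) : lst a N (s + a * c) = lst a N s + N * c := by
  unfold lst
  rw [show (s + a * c + 1) * (N : ℤ) - 1 = ((s + 1) * N - 1) + (N * c) * a by ring,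
    Int.add_mul_ediv_right _ _ (by exact_mod_cast (by omega : a ≠ 0))]

lemma endDist_add (ha : 1 ≤ a) (hN : 1 ≤ N) (x c : ℤ) : endDist a N (x + N * c) = endDist a N x := by
  unfold endDist
  rw [seg_add hN, lst_add ha]
  congr 1
  ring

lemma endDist_le (ha : 1 ≤ a) (hN : 1 ≤ N) (hr : N < a * (r + 1)) (x : ℤ) : endDist a N x ≤ r := by
  unfold endDist
  have h1 := (lst_le_iff (N := N) ha (seg a N x) (lst a N (seg a N x))).1 le_rfl
  have h2 : ¬ seg a N x ≤ seg a N x - 1 := by omega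
  rw [seg_le_iff hN] at h2
  have h3 : (N : ℤ) < a * (r + 1) := by exact_mod_cast hr
  have h4 : (a : ℤ) * (lst a N (seg a N x) - x) < a * (r + 1) := by nlinarith
  have h5 : lst a N (seg a N x) - x < r + 1 := lt_of_mul_lt_mul_left h4 (by positivity)
  omega

lemma endDist_cast (ha : 1 ≤ a) (hN : 1 ≤ N) (x : ℤ) : (endDist a N x : ℤ) = lst a N (seg a N x) - x := by
  unfold endDist
  have := le_lst ha hN x
  omega

lemma endDist_lst (ha : 1 ≤ a) (haN : a ≤ N) (s : ℤ) : endDist a N (lst a N s) = 0 := by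
  unfold endDist
  rw [seg_lst ha haN]; simp

lemma msg_card (ha : 1 ≤ a) (haN : a ≤ N) :
    ((Finset.Ico (0 : ℤ) N).filter (fun x => endDist a N x ≠ 0)).card = N - a := by
  have hN : 1 ≤ N := by omega
  have h1 := Finset.card_filter_add_card_filter_not (s := Finset.Ico (0 : ℤ) N) (fun x => endDist a N x = 0)
  have h2 : (Finset.Ico (0 : ℤ) N).filter (fun x => endDist a N x = 0) = (Finset.Ico (0 : ℤ) a).image (lst a N) := by
    ext x
    simp only [Finset.mem_filter, Finset.mem_image, Finset.mem_Ico]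
    have hNz : (0 : ℤ) < N := by exact_mod_cast hN
    have haz : (0 : ℤ) < a := by exact_mod_cast ha
    constructor
    · rintro ⟨⟨h3, h4⟩, h5⟩
      refine ⟨seg a N x, ⟨?_, ?_⟩, ?_⟩
      · unfold seg; positivity
      · unfold seg; rw [Int.ediv_lt_iff_lt_mul hNz]; nlinarith
      · have := endDist_cast ha hN x; omega
    · rintro ⟨s, ⟨h3, h4⟩, rfl⟩
      refine ⟨⟨?_, ?_⟩, endDist_lst ha haN s⟩
      · rw [lst_le_iff ha]; rw [mul_zero]; positivity
      · have : ¬ ((N : ℤ) ≤ lst a N s) := by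
          rw [lst_le_iff ha]
          nlinarith
        omega
  have h3 : ((Finset.Ico (0 : ℤ) a).image (lst a N)).card = a := by
    rw [Finset.card_image_of_injective]
    · simp
    · intro s s' h
      rw [← seg_lst ha haN s, h, seg_lst ha haN]
  rw [h2, h3] at h1
  simp only [Int.card_Ico, sub_zero, Int.toNat_natCast] at h1
  simp only [ne_eq]
  omega

lemma exists_idx {k : ℕ} (ha : 1 ≤ a) (haN : a < N) (hk : k = N - a) :
    ∃ idx : ℤ → Fin k, ∀ j, ∃ x : ℤ, 0 ≤ x ∧ x < N ∧ endDist a N x ≠ 0 ∧ idx x = j := by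
  classical
  have hc := msg_card ha haN.le
  rw [← hk] at hc
  let φ := Finset.equivFinOfCardEq hc
  refine ⟨fun x => if h : x ∈ (Finset.Ico (0 : ℤ) N).filter (fun x => endDist a N x ≠ 0) then φ ⟨x, h⟩
    else ⟨0, by omega⟩, fun j => ⟨φ.symm j, ?_⟩⟩
  have h1 := (φ.symm j).2
  have h2 := h1
  rw [Finset.mem_filter, Finset.mem_Ico] at h2
  refine ⟨h2.1.1, h2.1.2, h2.2, ?_⟩
  refine (dif_pos h1).trans ?_
  simp

/-- scalar symbol value at time `t`, position `x` (zero at parity positions) -/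
def Mv {F : Type} [Field F] (a N : ℕ) {k : ℕ} (idx : ℤ → Fin k) (m : ℤ → Fin k → F) (t x : ℤ) : F :=
  if endDist a N x = 0 then 0 else m t (idx (x % N))

/-- parity value -/
def Par {F : Type} [Field F] (a N r : ℕ) (w g : ℕ → F) {k : ℕ} (idx : ℤ → Fin k) (m : ℤ → Fin k → F)
    (t p : ℤ) : F :=
  ∑ d ∈ Finset.range N, Hc w g r (seg a N) (endDist a N) (seg a N p) (p - d) * Mv a N idx m (t - d) (p - d)

lemma Par_add {F : Type} [Field F] (ha : 1 ≤ a) (hN : 1 ≤ N) (w g : ℕ → F) {k : ℕ} (idx : ℤ → Fin k)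
    (m : ℤ → Fin k → F) (t p c : ℤ) : Par a N r w g idx m t (p + N * c) = Par a N r w g idx m t p := by
  unfold Par
  refine Finset.sum_congr rfl fun d _ => ?_
  have e1 : p + N * c - d = (p - d) + N * c := by ring
  rw [e1]
  unfold Hc Mv
  rw [seg_add hN, seg_add hN, endDist_add ha hN, Int.add_mul_emod_self_left]
  have e2 : seg a N p + a * c - (seg a N (p - d) + a * c) = seg a N p - seg a N (p - d) := by ring
  rw [e2]
  simp only [add_le_add_iff_right]

/-- the code -/
def theCode {F : Type} [Field F] (a N r : ℕ) (w g : ℕ → F) {k : ℕ} (idx : ℤ → Fin k) : PacketCode F k N where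
  parity m t i := Par a N r w g idx m t (lst a N (i : ℕ))
  causal := by
    intro m m' t h
    ext i
    unfold Par Mv
    refine Finset.sum_congr rfl fun d _ => ?_
    rw [h (t - d) (by omega)]

/-- discrepancy in a thread -/
def zz {F : Type} [Field F] (a N r : ℕ) (w g : ℕ → F) {k : ℕ} (idx : ℤ → Fin k) (m m' : ℤ → Fin k → F)
    (t x0 x : ℤ) : F :=
  if endDist a N x = 0 then
    -(Par a N r w g idx m (t + (x - x0)) x - Par a N r w g idx m' (t + (x - x0)) x)
  else m (t + (x - x0)) (idx (x % N)) - m' (t + (x - x0)) (idx (x % N))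

lemma row_eq {F : Type} [Field F] (ha : 1 ≤ a) (haN : a ≤ N) (w g : ℕ → F) (w0 : w 0 = 1) {k : ℕ}
    (idx : ℤ → Fin k) (m m' : ℤ → Fin k → F) (t x0 : ℤ) (hpast : ∀ t' < t, m t' = m' t') (s : ℤ)
    (hs : x0 ≤ lst a N s) (hs' : lst a N s < x0 + N) :
    ∑ x ∈ Finset.Icc x0 (lst a N s), Hc w g r (seg a N) (endDist a N) s x * zz a N r w g idx m m' t x0 x = 0 := by
  have hN : 1 ≤ N := by omega
  set p := lst a N s with hp
  have hsp : seg a N p = s := seg_lst ha haN s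
  let y : ℤ → F := fun x => Mv a N idx m (t + (x - x0)) x - Mv a N idx m' (t + (x - x0)) x
  have hy : ∀ x, x < x0 → y x = 0 := by
    intro x hx
    simp only [y, Mv]
    rw [hpast (t + (x - x0)) (by omega), sub_self]
  have hpar : Par a N r w g idx m (t + (p - x0)) p - Par a N r w g idx m' (t + (p - x0)) p =
      ∑ x ∈ Finset.Icc x0 p, Hc w g r (seg a N) (endDist a N) s x * y x := by
    unfold Par
    rw [← Finset.sum_sub_distrib]
    symm
    apply Finset.sum_of_injOn (fun x => (p - x).toNat)
    · intro x hx x' hx' h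
      simp only [Finset.coe_Icc, Set.mem_Icc] at hx hx'
      simp only at h
      omega
    · intro x hx
      simp only [Finset.coe_Icc, Set.mem_Icc] at hx
      simp only [Finset.coe_range, Set.mem_Iio]
      omega
    · intro d hd hd'
      have hlt : p - d < x0 := by
        by_contra h
        apply hd'
        refine ⟨p - d, ?_, ?_⟩
        · simp only [Finset.coe_Icc, Set.mem_Icc]; omega
        · simp
      have h1 := hy _ hlt
      simp only [y] at h1
      rw [show t + (p - d - x0) = t + (p - x0) - d by ring] at h1
      rw [← mul_sub, h1, mul_zero]
    · intro x hx
      rw [Finset.mem_Icc] at hx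
      have e1 : (((p - x).toNat : ℕ) : ℤ) = p - x := by omega
      simp only [e1, y, hsp]
      rw [show p - (p - x) = x by ring, show t + (p - x0) - (p - x) = t + (x - x0) by ring]
      ring
  have hpm : p ∈ Finset.Icc x0 p := by simp [hs]
  rw [← Finset.add_sum_erase _ _ hpm]
  have hep : endDist a N p = 0 := endDist_lst ha haN s
  have h1 : Hc w g r (seg a N) (endDist a N) s p * zz a N r w g idx m m' t x0 p =
      -∑ x ∈ Finset.Icc x0 p, Hc w g r (seg a N) (endDist a N) s x * y x := by
    rw [← hpar]
    simp [Hc, hsp, zz, hep, w0, Mc]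
  have h2 : ∑ x ∈ (Finset.Icc x0 p).erase p, Hc w g r (seg a N) (endDist a N) s x * zz a N r w g idx m m' t x0 x
      = ∑ x ∈ Finset.Icc x0 p, Hc w g r (seg a N) (endDist a N) s x * y x := by
    rw [← Finset.add_sum_erase _ (fun x => Hc w g r (seg a N) (endDist a N) s x * y x) hpm]
    have : y p = 0 := by simp [y, Mv, hep]
    rw [this, mul_zero, zero_add]
    refine Finset.sum_congr rfl fun x hx => ?_
    rw [Finset.mem_erase, Finset.mem_Icc] at hx
    by_cases hex : endDist a N x = 0
    · have h3 := endDist_cast ha hN x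
      have h4 : seg a N x ≠ s := by
        intro h
        rw [h, hex] at h3
        push_cast at h3
        omega
      have h5 : Hc w g r (seg a N) (endDist a N) s x = 0 := by
        unfold Hc
        split_ifs with h6
        · rw [hex, Mc, if_neg (by omega), if_pos rfl, mul_zero]
        · rfl
      rw [h5, zero_mul, zero_mul]
    · simp [zz, y, Mv, hex]
  rw [h1, h2]
  ring

lemma zz_zero {F : Type} [Field F] (ha : 1 ≤ a) (haN : a < N) (w g : ℕ → F) {k : ℕ} (hk : N - k = a)
    (idx : ℤ → Fin k) (m m' : ℤ → Fin k → F) (t x0 x : ℤ)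
    (h : m (t + (x - x0)) = m' (t + (x - x0)) ∧
      (theCode a N r w g idx).parity m (t + (x - x0)) = (theCode a N r w g idx).parity m' (t + (x - x0))) :
    zz a N r w g idx m m' t x0 x = 0 := by
  have hN : 1 ≤ N := by omega
  unfold zz
  split_ifs with he
  · have haz : (0 : ℤ) < a := by exact_mod_cast ha
    have h1 := endDist_cast ha hN x
    have hs0 := Int.emod_nonneg (seg a N x) haz.ne'
    have hs1 := Int.emod_lt_of_pos (seg a N x) haz
    have h2 : x = lst a N ((seg a N x % a).toNat : ℕ) + N * (seg a N x / a) := by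
      rw [← lst_add ha, Int.toNat_of_nonneg hs0, Int.emod_add_mul_ediv]
      omega
    have h3 := congrFun h.2 ⟨(seg a N x % a).toNat, by omega⟩
    simp only [theCode] at h3
    rw [← Par_add ha hN (c := seg a N x / a), ← Par_add ha hN (m := m') (c := seg a N x / a), ← h2] at h3
    rw [h3]; simp
  · rw [h.1, sub_self]

end pos

lemma code_SC {F : Type} [Field F] (a N τ r : ℕ) (hNτ : N = τ + 1) (ha : 1 ≤ a) (haN : a < N) (hr : N < a * (r + 1))
    (w g : ℕ → F)
    (hg : ∀ i j, 1 ≤ i → i ≤ r + a - 1 → 1 ≤ j → j ≤ r + a - 1 → g i = g j → i = j)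
    (S : ℕ → Subfield F) (hS : Monotone S) (hgS : ∀ i, g i ∈ S 0) (w0 : w 0 = 1) (w1 : w 1 = 1)
    (hw : ∀ d, 2 ≤ d → d < a → w d ∈ S (d - 1) ∧ w d ∉ S (d - 2)) {k : ℕ} (hk : N - k = a)
    (idx : ℤ → Fin k) (hidx : ∀ j, ∃ x : ℤ, 0 ≤ x ∧ x < N ∧ endDist a N x ≠ 0 ∧ idx x = j) :
    IsLRSC (theCode a N r w g idx) a τ r := by
  classical
  have hN : 1 ≤ N := by omega
  constructor
  · intro m m' _ _ t _ E hE htE hEa hpast hobs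
    ext j
    obtain ⟨x0, hx0, hx0N, hex0, hj⟩ := hidx j
    have hz0 : zz a N r w g idx m m' t x0 x0 = 0 := by
      have hwin : ∀ v : ℕ, v < a → lst a N (seg a N x0 + v) < x0 + N := by
        intro v hv
        have : ¬ (x0 + N ≤ lst a N (seg a N x0 + v)) := by
          rw [← seg_le_iff' ha hN]
          have := seg_add (a := a) hN x0 1
          rw [mul_one, mul_one] at this
          rw [this]
          omega
        omega
      refine core2 w g r a ha hg S hS hgS w0 w1 hw (seg a N) (endDist a N) (endDist_le ha hN hr) ?_
        (E.image (fun s => s - t + x0)) x0 ?_ ?_ ?_ (zz a N r w g idx m m' t x0) ?_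
      · intro x y h1 h2
        have h3 := endDist_cast ha hN x
        have h4 := endDist_cast ha hN y
        rw [h1, h2] at h3
        omega
      · rw [Finset.mem_image]; exact ⟨t, htE, by ring⟩
      · intro x hx
        obtain ⟨s, hs, rfl⟩ := Finset.mem_image.1 hx
        exact seg_mono hN _ _ (by have := hE s hs; omega)
      · exact Finset.card_image_le.trans hEa
      · intro v hv
        have hle : x0 ≤ lst a N (seg a N x0 + v) := by
          rw [← seg_le_iff' ha hN]; omega
        have h1 := row_eq (r := r) ha haN.le w g w0 idx m m' t x0 hpast (seg a N x0 + v) hle (hwin v hv)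
        have h2 := hwin v hv
        have h3 : ∑ x ∈ Finset.Icc x0 (lst a N (seg a N x0 + v)), 
            Hc w g r (seg a N) (endDist a N) (seg a N x0 + v) x * zz a N r w g idx m m' t x0 x =
            ∑ x ∈ Finset.Icc x0 (x0 + τ), 
            Hc w g r (seg a N) (endDist a N) (seg a N x0 + v) x * zz a N r w g idx m m' t x0 x := by
          apply Finset.sum_subset
          · apply Finset.Icc_subset_Icc le_rfl; omega
          · intro x hx hx'
            rw [Finset.mem_Icc] at hx hx'
            have : ¬ seg a N x ≤ seg a N x0 + v := by
              rw [seg_le_iff' ha hN]; omega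
            rw [Hc, if_neg this, zero_mul]
        rw [← h1, h3]
        apply Finset.sum_subset
        · intro x hx
          obtain ⟨s, hs, rfl⟩ := Finset.mem_image.1 hx
          have := hE s hs
          rw [Finset.mem_Icc]; omega
        · intro x hx hx'
          rw [Finset.mem_Icc] at hx
          rw [zz_zero ha haN w g hk idx, mul_zero]
          apply hobs _ (by omega) (by omega)
          intro h
          exact hx' (Finset.mem_image.2 ⟨_, h, by ring⟩)
    rw [zz, if_neg hex0, Int.emod_eq_of_lt hx0 hx0N, hj] at hz0
    simpa using sub_eq_zero.1 hz0
  · intro m m' _ _ t _ E hE htE hEa hpast hobs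
    ext j
    obtain ⟨x0, hx0, hx0N, hex0, hj⟩ := hidx j
    have hEt : ∀ s ∈ E, s = t := fun s hs => Finset.card_le_one.1 hEa s hs t htE
    have hle := le_lst ha hN x0
    have h5 := endDist_cast ha hN x0
    have h6 := endDist_le ha hN hr x0
    have hlt : lst a N (seg a N x0) < x0 + N := by
      have : ¬ (x0 + N ≤ lst a N (seg a N x0)) := by
        rw [← seg_le_iff' ha hN]
        have := seg_add (a := a) hN x0 1
        rw [mul_one, mul_one] at this
        rw [this]
        omega
      omega
    have h1 := row_eq (r := r) ha haN.le w g w0 idx m m' t x0 hpast (seg a N x0) hle hlt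
    rw [Finset.sum_eq_single x0] at h1
    · have hz0 : zz a N r w g idx m m' t x0 x0 = 0 := by
        simpa [Hc, w0, Mc] using h1
      rw [zz, if_neg hex0, Int.emod_eq_of_lt hx0 hx0N, hj] at hz0
      simpa using sub_eq_zero.1 hz0
    · intro x hx hne
      rw [Finset.mem_Icc] at hx
      rw [zz_zero ha haN w g hk idx, mul_zero]
      apply hobs _ (by omega) (by omega)
      intro h
      have := hEt _ h
      omega
    · intro h
      exact absurd (Finset.mem_Icc.2 ⟨le_rfl, hle⟩) h

/-- For `τ + 1 < a(r+1)` and a prime power `q ≥ r + a - 1`, there exists a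
rate-optimal `(a, τ, r)` LRSC over the field of size `q^(2^(a-2))` with
`k = τ+1-a` and `n = τ+1`, and in this parameter range
`min{(τ+1-a)/(τ+1), r/(r+1)} = (τ+1-a)/(τ+1)`. -/
theorem LRSC_small_tau (a τ r q : ℕ) (ha : 1 < a) (haτ : a ≤ τ) (hr : 1 ≤ r)
    (hrτ : r < τ) (hpar : τ + 1 < a * (r + 1)) (hq : IsPrimePow q)
    (hqsize : r + a - 1 ≤ q) :
    (∃ (F : Type) (_ : Field F) (_ : Fintype F),
        Fintype.card F = q ^ 2 ^ (a - 2) ∧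
        ∃ C : PacketCode F (τ + 1 - a) (τ + 1), IsLRSC C a τ r) ∧
    min (((τ : ℚ) + 1 - a) / ((τ : ℚ) + 1)) ((r : ℚ) / ((r : ℚ) + 1)) =
      ((τ : ℚ) + 1 - a) / ((τ : ℚ) + 1) := by
  refine ⟨?_, ?_⟩
  · obtain ⟨F, hF, hFt, hcard, S, β, g, hS, hβ, hgS, hginj⟩ := field_tower q (a - 2) hq
    refine ⟨F, hF, hFt, hcard, ?_⟩
    obtain ⟨idx, hidx⟩ := exists_idx (a := a) (N := τ + 1) (k := τ + 1 - a) (by omega) (by omega) rfl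
    refine ⟨theCode a (τ + 1) r (fun d => if d < 2 then 1 else β (d - 2)) g idx, ?_⟩
    refine code_SC a (τ + 1) τ r rfl (by omega) (by omega) hpar _ g ?_ S hS hgS (by simp) (by simp) ?_
      (by omega) idx hidx
    · intro i j h1 h2 h3 h4 h
      exact hginj i j h1 (by omega) h3 (by omega) h
    · intro d hd hda
      have h1 := hβ (d - 2) (by omega)
      rw [show d - 2 + 1 = d - 1 by omega] at h1
      simpa [show ¬ d < 2 by omega] using h1
  · apply min_eq_left
    rw [div_le_div_iff₀ (by positivity) (by positivity)]
    have : (τ : ℚ) + 1 < a * (r + 1) := by exact_mod_cast hpar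
    nlinarith
end

section
/- For every integer τ > 2 and every prime power q with q ≥ ⌈(τ+1)/2⌉, there exists a (2, τ) streaming code over F_q of rate (τ−1)/(τ+1), which is the optimal rate of a (2,τ) SC. (This improves the field-size requirement for rate-optimal (a=2,τ) streaming codes from q ≥ τ to q ≥ ⌈(τ+1)/2⌉.) -/
lemma sc_aux_alone {F : Type} [Field F] {K : ℕ} (d : Fin K → ℕ) (c : Fin K → F)
    (D : ℤ → Fin K → F) (t : ℤ) (τ j : ℕ) (hd1 : ∀ k, 1 ≤ d k) (hdτ : ∀ k, d k ≤ τ)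
    (hinj : Function.Injective d)
    (hD : ∀ s : ℤ, s ≤ t + τ → s ≠ t → s ≠ t + j → D s = 0) (k : Fin K)
    (hs : ∑ i, c i * D (t + d k - d i) i = 0)
    (hno : ∀ k', d k' + j ≠ d k) (hc : c k ≠ 0) : D t k = 0 := by
  rw [Finset.sum_eq_single k] at hs
  · have : t + (d k : ℤ) - d k = t := by ring
    rw [this] at hs
    exact (mul_eq_zero.mp hs).resolve_left hc
  · intro b _ hb
    have h1 := hd1 b
    have h2 := hdτ k
    have h3 := hno b
    have h4 : d b ≠ d k := fun h => hb (hinj h)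
    rw [hD _ (by omega) (by omega) (by omega)]
    simp
  · simp

lemma sc_aux_pair {F : Type} [Field F] {K : ℕ} (d : Fin K → ℕ) (c : Fin K → F)
    (D : ℤ → Fin K → F) (t : ℤ) (τ j : ℕ) (hj : 1 ≤ j) (hd1 : ∀ k, 1 ≤ d k)
    (hdτ : ∀ k, d k ≤ τ)
    (hinj : Function.Injective d)
    (hD : ∀ s : ℤ, s ≤ t + τ → s ≠ t → s ≠ t + j → D s = 0) (k k' : Fin K)
    (hs : ∑ i, c i * D (t + d k - d i) i = 0)
    (hk : d k' + j = d k) : c k * D t k + c k' * D (t + j) k' = 0 := by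
  have hne : k ≠ k' := by rintro rfl; omega
  rw [← Finset.sum_subset (Finset.subset_univ {k, k'})] at hs
  · rw [Finset.sum_pair hne] at hs
    have e1 : t + (d k : ℤ) - d k = t := by ring
    have e2 : t + (d k : ℤ) - d k' = t + j := by omega
    rwa [e1, e2] at hs
  · intro b _ hb
    simp only [Finset.mem_insert, Finset.mem_singleton, not_or] at hb
    have h1 := hd1 b
    have h2 := hdτ k
    have h3 : d b ≠ d k' := fun h => hb.2 (hinj h)
    have h4 : d b ≠ d k := fun h => hb.1 (hinj h)
    rw [hD _ (by omega) (by omega) (by omega)]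
    simp

/-- Code with two parities, each a diagonal with delays `d1`, `d2`. -/
def twoParityCode {F : Type} [Field F] (τ : ℕ) (d1 d2 : Fin (τ - 1) → ℕ)
    (c1 c2 : Fin (τ - 1) → F) : PacketCode F (τ - 1) (τ + 1) where
  parity m s i := if i.val = 0 then ∑ k, c1 k * m (s - d1 k) k
    else ∑ k, c2 k * m (s - d2 k) k
  causal m m' t h := by
    funext i
    have h1 : ∀ k, m (t - d1 k) k = m' (t - d1 k) k := fun k => by rw [h _ (by omega)]
    have h2 : ∀ k, m (t - d2 k) k = m' (t - d2 k) k := fun k => by rw [h _ (by omega)]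
    simp only [h1, h2]

lemma sc_exists {F : Type} [Field F] (τ u v : ℕ) (huv : u + v = τ - 1) (hτ : 2 < τ)
    (g : ℕ → F) (g0 : ∀ i, g i ≠ 0)
    (gi : ∀ i j, i < u ∨ i < v → j < u ∨ j < v → g i = g j → i = j) :
    ∃ C : PacketCode F (τ - 1) (τ + 1), IsSC C 2 τ := by
  obtain ⟨d1, hd1⟩ : ∃ d : Fin (τ - 1) → ℕ,
    ∀ k, d k = if k.val < u then k.val + 1 else k.val + 2 := ⟨_, fun _ => rfl⟩
  obtain ⟨d2, hd2⟩ : ∃ d : Fin (τ - 1) → ℕ,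
    ∀ k, d k = if k.val < u then v + 2 + k.val else k.val - u + 1 := ⟨_, fun _ => rfl⟩
  obtain ⟨c1, hc1⟩ : ∃ c : Fin (τ - 1) → F,
    ∀ k, c k = if k.val < u then g k.val else 1 := ⟨_, fun _ => rfl⟩
  obtain ⟨c2, hc2⟩ : ∃ c : Fin (τ - 1) → F,
    ∀ k, c k = if k.val < u then 1 else g (k.val - u) := ⟨_, fun _ => rfl⟩
  have c10 : ∀ k, c1 k ≠ 0 := by
    intro k; rw [hc1]; split_ifs <;> simp [g0]
  have c20 : ∀ k, c2 k ≠ 0 := by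
    intro k; rw [hc2]; split_ifs <;> simp [g0]
  have a1 : ∀ k, 1 ≤ d1 k := by intro k; rw [hd1]; split_ifs <;> omega
  have a2 : ∀ k, 1 ≤ d2 k := by intro k; rw [hd2]; split_ifs <;> omega
  have b1 : ∀ k, d1 k ≤ τ := by intro k; rw [hd1]; have := k.2; split_ifs <;> omega
  have b2 : ∀ k, d2 k ≤ τ := by intro k; rw [hd2]; have := k.2; split_ifs <;> omega
  have i1 : Function.Injective d1 := by
    intro x y h; rw [hd1, hd1] at h; apply Fin.ext; split_ifs at h <;> omega
  have i2 : Function.Injective d2 := by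
    intro x y h; rw [hd2, hd2] at h; apply Fin.ext
    have := x.2; have := y.2
    split_ifs at h <;> omega
  refine ⟨twoParityCode τ d1 d2 c1 c2, ?_⟩
  intro m m' _ _ t _ E hE htE hcard hpast hwin
  obtain ⟨j, hj1, hEj⟩ : ∃ j : ℕ, 1 ≤ j ∧ ∀ x ∈ E, x = t ∨ x = t + j := by
    by_cases h : ∃ e ∈ E, e ≠ t
    · obtain ⟨e, he, hne⟩ := h
      have h1 := hE e he
      refine ⟨(e - t).toNat, by omega, ?_⟩
      intro x hx
      by_contra hcon
      push Not at hcon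
      have hsub : ({t, e, x} : Finset ℤ) ⊆ E := by
        intro y hy
        simp only [Finset.mem_insert, Finset.mem_singleton] at hy
        rcases hy with rfl | rfl | rfl <;> assumption
      have h3 : ({t, e, x} : Finset ℤ).card = 3 := by
        rw [Finset.card_eq_three]
        exact ⟨t, e, x, hne.symm, hcon.1.symm, by omega, rfl⟩
      have := Finset.card_le_card hsub
      omega
    · push Not at h
      exact ⟨1, le_rfl, fun x hx => Or.inl (h x hx)⟩
  have hD : ∀ s : ℤ, s ≤ t + τ → s ≠ t → s ≠ t + j → (m - m') s = 0 := by
    intro s h1 h2 h3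
    simp only [Pi.sub_apply, sub_eq_zero]
    by_cases h : s < t
    · exact hpast s h
    · exact (hwin s (by omega) h1 (fun hs => by have := hEj s hs; omega)).1
  have hP : ∀ l : ℕ, 1 ≤ l → l ≤ τ → l ≠ j →
      ∑ i, c1 i * (m - m') (t + l - d1 i) i = 0 ∧ ∑ i, c2 i * (m - m') (t + l - d2 i) i = 0 := by
    intro l h1 h2 h3
    have h := (hwin (t + l) (by omega) (by omega) (fun hs => by have := hEj _ hs; omega)).2
    have e0 := congrFun h ⟨0, by omega⟩
    have e1 := congrFun h ⟨1, by omega⟩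
    simp only [twoParityCode, if_true, one_ne_zero, if_false] at e0 e1
    simp only [Pi.sub_apply, mul_sub, Finset.sum_sub_distrib, e0, e1, sub_self, and_self]
  generalize hDD : m - m' = D at hD hP
  have key : ∀ k, D t k = 0 := by
    intro k
    have hk := k.2
    have A1 : d1 k ≠ j → (∀ k', d1 k' + j ≠ d1 k) → D t k = 0 := fun h h' =>
      sc_aux_alone d1 c1 D t τ j a1 b1 i1 hD k (hP _ (a1 k) (b1 k) h).1 h' (c10 k)
    have A2 : d2 k ≠ j → (∀ k', d2 k' + j ≠ d2 k) → D t k = 0 := fun h h' =>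
      sc_aux_alone d2 c2 D t τ j a2 b2 i2 hD k (hP _ (a2 k) (b2 k) h).2 h' (c20 k)
    have hpair : ∀ k', d1 k' + j = d1 k → d2 k' + j = d2 k →
        c1 k * c2 k' ≠ c2 k * c1 k' → D t k = 0 := by
      intro k' h1 h2 hne
      have := a1 k'
      have := a2 k'
      have e1 := sc_aux_pair d1 c1 D t τ j hj1 a1 b1 i1 hD k k'
        (hP _ (a1 k) (b1 k) (by omega)).1 h1
      have e2 := sc_aux_pair d2 c2 D t τ j hj1 a2 b2 i2 hD k k'
        (hP _ (a2 k) (b2 k) (by omega)).2 h2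
      have : (c1 k * c2 k' - c2 k * c1 k') * D t k = 0 := by
        linear_combination c2 k' * e1 - c1 k' * e2
      exact (mul_eq_zero.mp this).resolve_left (sub_ne_zero.mpr hne)
    by_cases hku : k.val < u
    · rcases lt_trichotomy (k.val + 1) j with h | h | h
      · apply A1
        · rw [hd1, if_pos hku]; omega
        · intro k'; rw [hd1 k, if_pos hku]; omega
      · apply A2
        · rw [hd2, if_pos hku]; omega
        · intro k'; rw [hd2 k, if_pos hku, hd2 k']
          have := k'.2
          split_ifs <;> omega
      · have hk' : k.val - j < u := by omega
        apply hpair ⟨k.val - j, by omega⟩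
        · rw [hd1, hd1, if_pos hku, if_pos hk']; simp only; omega
        · rw [hd2, hd2, if_pos hku, if_pos hk']; simp only; omega
        · rw [hc1, hc1, hc2, hc2, if_pos hku, if_pos hku, if_pos hk', if_pos hk', mul_one, one_mul]
          intro hg
          have := gi _ _ (Or.inl hku) (Or.inl hk') hg
          omega
    · rcases lt_trichotomy (k.val - u + 1) j with h | h | h
      · apply A2
        · rw [hd2, if_neg hku]; omega
        · intro k'; rw [hd2 k, if_neg hku]; omega
      · apply A1
        · rw [hd1, if_neg hku]; omega
        · intro k'; rw [hd1 k, if_neg hku, hd1 k']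
          have := k'.2
          split_ifs <;> omega
      · have hk' : ¬ (k.val - j < u) := by omega
        apply hpair ⟨k.val - j, by omega⟩
        · rw [hd1, hd1, if_neg hku, if_neg hk']; simp only; omega
        · rw [hd2, hd2, if_neg hku, if_neg hk']; simp only; omega
        · rw [hc1, hc1, hc2, hc2, if_neg hku, if_neg hku, if_neg hk', if_neg hk', mul_one, one_mul]
          intro hg
          have := gi _ _ (Or.inr (by simp only; omega)) (Or.inr (by omega)) hg
          simp only at this
          omega
  funext k
  have := key k
  rw [← hDD] at this
  exact sub_eq_zero.mp this

lemma sc_bound (τ : ℕ) (hτ : 2 < τ) (F : Type) [Field F] [Fintype F] (k n : ℕ)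
    (C : PacketCode F k n) (hsc : IsSC C 2 τ) : k + k ≤ (τ - 1) * (n - k) := by
  classical
  let S : (Fin k → F) × (Fin k → F) → ℤ → Fin k → F :=
    fun p t => if t = 0 then p.1 else if t = 1 then p.2 else 0
  have hS : ∀ p, IsMsgStream (S p) := by
    intro p t ht
    simp only [S]
    rw [if_neg (by omega), if_neg (by omega)]
  have hSe : ∀ p p' t, t ≠ 0 → t ≠ 1 → S p t = S p' t := by
    intro p p' t h0 h1
    simp only [S]
    rw [if_neg h0, if_neg h1, if_neg h0, if_neg h1]
  let f : (Fin k → F) × (Fin k → F) → Fin (τ - 1) → Fin (n - k) → F :=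
    fun p i => C.parity (S p) (i.val + 2 : ℕ)
  have hf : Function.Injective f := by
    intro p p' h
    have hpar : ∀ t : ℤ, 2 ≤ t → t ≤ τ → C.parity (S p) t = C.parity (S p') t := by
      intro t h2 ht
      have := congrFun h ⟨(t - 2).toNat, by omega⟩
      simp only [f] at this
      have e : (((t - 2).toNat + 2 : ℕ) : ℤ) = t := by omega
      rwa [e] at this
    have h0 : S p 0 = S p' 0 := by
      refine hsc _ _ (hS p) (hS p') 0 le_rfl {0, 1} ?_ (by simp) Finset.card_le_two ?_ ?_
      · intro x hx
        simp only [Finset.mem_insert, Finset.mem_singleton] at hx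
        omega
      · intro t' ht'
        exact hSe _ _ _ (by omega) (by omega)
      · intro t' h1 h2 h3
        simp only [Finset.mem_insert, Finset.mem_singleton, not_or] at h3
        exact ⟨hSe _ _ _ h3.1 h3.2, hpar _ (by omega) (by omega)⟩
    have h1 : S p 1 = S p' 1 := by
      refine hsc _ _ (hS p) (hS p') 1 (by omega) {1, 1 + (τ : ℤ)} ?_ (by simp)
        Finset.card_le_two ?_ ?_
      · intro x hx
        simp only [Finset.mem_insert, Finset.mem_singleton] at hx
        omega
      · intro t' ht'
        by_cases h : t' = 0
        · rw [h, h0]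
        · exact hSe _ _ _ h (by omega)
      · intro t' h1 h2 h3
        simp only [Finset.mem_insert, Finset.mem_singleton, not_or] at h3
        exact ⟨hSe _ _ _ (by omega) h3.1, hpar _ (by omega) (by omega)⟩
    simp only [S, if_true, one_ne_zero, if_false] at h0 h1
    exact Prod.ext h0 h1
  have hcard := Fintype.card_le_of_injective f hf
  simp only [Fintype.card_prod, Fintype.card_fun, Fintype.card_fin] at hcard
  rw [← pow_add, ← pow_mul] at hcard
  have := (Nat.pow_le_pow_iff_right (Fintype.one_lt_card (α := F))).mp hcard
  rwa [mul_comm] at this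


/-- For every `τ > 2` and every prime power `q ≥ ⌈(τ+1)/2⌉`, there exists a
`(2, τ)` streaming code over `F_q` with `k = τ-1`, `n = τ+1`, i.e. of rate
`(τ-1)/(τ+1)`; moreover `(τ-1)/(τ+1)` is the optimal rate of a `(2,τ)` SC. -/
theorem two_tau_SC_small_field (τ q : ℕ) (hτ : 2 < τ) (hq : IsPrimePow q)
    (hqsize : (τ + 2) / 2 ≤ q) :
    (∃ (F : Type) (_ : Field F) (_ : Fintype F),
        Fintype.card F = q ∧
        ∃ C : PacketCode F (τ - 1) (τ + 1), IsSC C 2 τ) ∧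
    (∀ (F : Type) [Field F] [Fintype F] (k n : ℕ) (C : PacketCode F k n),
        1 ≤ k → k < n → IsSC C 2 τ →
        (k : ℚ) / n ≤ ((τ : ℚ) - 1) / ((τ : ℚ) + 1)) := by
  constructor
  · obtain ⟨p, e, hp, he, rfl⟩ := hq
    have : Fact p.Prime := ⟨hp.nat_prime⟩
    have : Fintype (GaloisField p e) := Fintype.ofFinite _
    have hcard : Fintype.card (GaloisField p e) = p ^ e := by
      rw [← Nat.card_eq_fintype_card, GaloisField.card p e (by omega)]
    refine ⟨GaloisField p e, inferInstance, inferInstance, hcard, ?_⟩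
    classical
    have hle : Fintype.card (Fin (τ / 2)) ≤ Fintype.card (GaloisField p e)ˣ := by
      rw [Fintype.card_units, Fintype.card_fin, hcard]
      omega
    obtain ⟨g⟩ := Function.Embedding.nonempty_of_card_le hle
    refine sc_exists τ (τ - 1 - τ / 2) (τ / 2) (by omega) hτ
      (fun i => if h : i < τ / 2 then (g ⟨i, h⟩ : GaloisField p e) else 1) ?_ ?_
    · intro i
      split_ifs <;> simp
    · intro i j hi hj h
      have hi' : i < τ / 2 := by omega
      have hj' : j < τ / 2 := by omega
      simp only [dif_pos hi', dif_pos hj'] at h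
      have := g.injective (Units.ext h)
      simpa using this
  · intro F _ _ k n C hk hkn hsc
    have h := sc_bound τ hτ F k n C hsc
    have hn : (0 : ℚ) < n := by exact_mod_cast (by omega : 0 < n)
    rw [div_le_div_iff₀ hn (by positivity)]
    obtain ⟨r, rfl⟩ : ∃ r, n = k + r := ⟨n - k, by omega⟩
    obtain ⟨s, rfl⟩ : ∃ s, τ = s + 1 := ⟨τ - 1, by omega⟩
    simp only [Nat.add_sub_cancel, Nat.add_sub_cancel_left] at h
    have h' : (k : ℚ) + k ≤ s * r := by exact_mod_cast h
    push_cast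
    nlinarith
end
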